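/- arXiv:2509.13501 — 2 statements merged into one kernel-verified Lean document; each statement's English description precedes it below -/
import Mathlib

section
/- (One-step robust reachability.) Let r = p_LA − p_k − t_s·v_k with r ≠ 0, ê = r/‖r‖, u_req = (2/t_s²)·‖r‖, and σ = 2·ε_p/t_s + ε_v. If |u_req| ≤ a_max − σ, then for every pair of noise vectors n_p, n_v ∈ ℝ³ with ‖n_p‖ ≤ ε_p and ‖n_v‖ ≤ ε_v, there exists η ∈ ℝ with |η| ≤ σ such that the command u = (u_req + η)·ê satisfies ‖u‖ ≤ a_max and cancels the axial one-step error: ⟨ê, r − (t_s²/2)·u − t_s·n_p − (t_s²/2)·n_v⟩ = 0. -/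
open scoped RealInnerProductSpace

/-- One-step robust reachability (Theorem 1): with `r = p_LA - p_k - t_s • v_k ≠ 0`,
`ê = r/‖r‖`, `u_req = (2/t_s²) ‖r‖`, and `σ = 2 ε_p / t_s + ε_v`, if
`|u_req| ≤ a_max - σ`, then for all admissible noises there is an axial
adjustment `η` with `|η| ≤ σ` such that `u = (u_req + η) • ê` satisfies
`‖u‖ ≤ a_max` and cancels the axial one-step error. -/
theorem one_step_robust_reachability
    (t_s : ℝ) (ht : 0 < t_s)
    (a_max : ℝ) (ha : 0 < a_max)
    (ε_p ε_v : ℝ) (hεp : 0 ≤ ε_p) (hεv : 0 ≤ ε_v)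
    (p_k v_k p_LA : EuclideanSpace ℝ (Fin 3))
    (r : EuclideanSpace ℝ (Fin 3)) (hr_def : r = p_LA - p_k - t_s • v_k)
    (hr : r ≠ 0)
    (ehat : EuclideanSpace ℝ (Fin 3)) (he : ehat = ‖r‖⁻¹ • r)
    (u_req σ : ℝ)
    (hu_req : u_req = (2 / t_s ^ 2) * ‖r‖)
    (hσ : σ = 2 * ε_p / t_s + ε_v)
    (hmargin : |u_req| ≤ a_max - σ) :
    ∀ n_p n_v : EuclideanSpace ℝ (Fin 3),
      ‖n_p‖ ≤ ε_p → ‖n_v‖ ≤ ε_v →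
      ∃ η : ℝ, |η| ≤ σ ∧
        ‖(u_req + η) • ehat‖ ≤ a_max ∧
        ⟪ehat, r - (t_s ^ 2 / 2) • ((u_req + η) • ehat)
            - t_s • n_p - (t_s ^ 2 / 2) • n_v⟫ = 0 := by
  intro n_p n_v hp hv
  have hrn : 0 < ‖r‖ := norm_pos_iff.mpr hr
  have hen : ‖ehat‖ = 1 := by
    rw [he, norm_smul, norm_inv, norm_norm, inv_mul_cancel₀ hrn.ne']
  have her : inner ℝ ehat r = ‖r‖ := by
    rw [he, real_inner_smul_left, real_inner_self_eq_norm_sq]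
    field_simp
  have hee : inner ℝ ehat ehat = (1 : ℝ) := by
    rw [real_inner_self_eq_norm_sq, hen]; norm_num
  have h1 : |inner ℝ ehat n_p| ≤ ε_p := by
    have := abs_real_inner_le_norm ehat n_p
    rw [hen, one_mul] at this
    exact this.trans hp
  have h2 : |inner ℝ ehat n_v| ≤ ε_v := by
    have := abs_real_inner_le_norm ehat n_v
    rw [hen, one_mul] at this
    exact this.trans hv
  have hη : |-(2 / t_s * inner ℝ ehat n_p) - inner ℝ ehat n_v| ≤ σ := by
    have h3 : |2 / t_s * inner ℝ ehat n_p| ≤ 2 * ε_p / t_s := by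
      rw [abs_mul, abs_of_pos (by positivity : 0 < 2 / t_s), mul_div_right_comm]
      gcongr
    rw [hσ]
    refine (abs_sub _ _).trans ?_
    rw [abs_neg]
    exact add_le_add h3 h2
  refine ⟨-(2 / t_s * inner ℝ ehat n_p) - inner ℝ ehat n_v, hη, ?_, ?_⟩
  · rw [norm_smul, hen, mul_one, Real.norm_eq_abs]
    refine (abs_add_le _ _).trans ?_
    linarith
  · simp only [inner_sub_right, real_inner_smul_right, her, hee, hu_req]
    field_simp
    ring
end

section
/- (Monotone position/velocity trade-off in the weight.) Let u*(C) = (r + (2C/t_s)·d)/((1/2)·t_s² + 2C) and define φ(C) = ‖r − (t_s²/2)·u*(C)‖ and ψ(C) = ‖d − t_s·u*(C)‖ for C ≥ 0. If 2·r ≠ t_s·d, then φ is strictly increasing on [0, ∞) and ψ is strictly decreasing on [0, ∞); moreover φ(0) = 0. -/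
/-- Monotone position/velocity trade-off in the weight: with
`u*(C) = (r + (2C/t_s) • d)/((1/2) t_s² + 2C)`,
`φ(C) = ‖r - (t_s²/2) • u*(C)‖` and `ψ(C) = ‖d - t_s • u*(C)‖`, if
`2 • r ≠ t_s • d` then `φ` is strictly increasing and `ψ` strictly decreasing
on `[0, ∞)`, and `φ(0) = 0`. -/
theorem residual_tradeoff_monotone
    (t_s : ℝ) (ht : 0 < t_s)
    (r d : EuclideanSpace ℝ (Fin 3))
    (hrd : (2 : ℝ) • r ≠ t_s • d)
    (ustar : ℝ → EuclideanSpace ℝ (Fin 3))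
    (hustar : ∀ C : ℝ,
      ustar C = ((1 / 2) * t_s ^ 2 + 2 * C)⁻¹ • (r + (2 * C / t_s) • d))
    (φ ψ : ℝ → ℝ)
    (hφ : ∀ C : ℝ, φ C = ‖r - (t_s ^ 2 / 2) • ustar C‖)
    (hψ : ∀ C : ℝ, ψ C = ‖d - t_s • ustar C‖) :
    StrictMonoOn φ (Set.Ici 0) ∧ StrictAntiOn ψ (Set.Ici 0) ∧ φ 0 = 0 := by
  have hw : 0 < ‖(2 : ℝ) • r - t_s • d‖ := norm_pos_iff.2 (sub_ne_zero.2 hrd)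
  have hD : ∀ C : ℝ, 0 ≤ C → 0 < (1 / 2) * t_s ^ 2 + 2 * C := fun C hC => by positivity
  have h1 : ∀ C : ℝ, 0 ≤ C →
      φ C = C / ((1 / 2) * t_s ^ 2 + 2 * C) * ‖(2 : ℝ) • r - t_s • d‖ := by
    intro C hC
    have hp := hD C hC
    have e : r - (t_s ^ 2 / 2) • ustar C
        = (C / ((1 / 2) * t_s ^ 2 + 2 * C)) • ((2 : ℝ) • r - t_s • d) := by
      rw [hustar]
      ext i
      simp only [PiLp.sub_apply, PiLp.smul_apply, PiLp.add_apply, smul_eq_mul]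
      generalize hx : (1 / 2) * t_s ^ 2 + 2 * C = D at hp ⊢
      have : C = (D - (1 / 2) * t_s ^ 2) / 2 := by linarith
      subst this
      field_simp
      ring
    rw [hφ, e, norm_smul, Real.norm_of_nonneg (by positivity)]
  have h2 : ∀ C : ℝ, 0 ≤ C →
      ψ C = (t_s / 2) / ((1 / 2) * t_s ^ 2 + 2 * C) * ‖(2 : ℝ) • r - t_s • d‖ := by
    intro C hC
    have hp := hD C hC
    have e : d - t_s • ustar C
        = -(((t_s / 2) / ((1 / 2) * t_s ^ 2 + 2 * C)) • ((2 : ℝ) • r - t_s • d)) := by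
      rw [hustar]
      ext i
      simp only [PiLp.sub_apply, PiLp.smul_apply, PiLp.add_apply, PiLp.neg_apply, smul_eq_mul]
      generalize hx : (1 / 2) * t_s ^ 2 + 2 * C = D at hp ⊢
      have : C = (D - (1 / 2) * t_s ^ 2) / 2 := by linarith
      subst this
      field_simp
      ring
    rw [hψ, e, norm_neg, norm_smul, Real.norm_of_nonneg (by positivity)]
  refine ⟨?_, ?_, ?_⟩
  · intro a ha b hb hab
    rw [h1 a ha, h1 b hb]
    refine mul_lt_mul_of_pos_right ?_ hw
    rw [div_lt_div_iff₀ (hD a ha) (hD b hb)]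
    have := mul_lt_mul_of_pos_right hab (pow_pos ht 2)
    nlinarith
  · intro a ha b hb hab
    rw [h2 a ha, h2 b hb]
    refine mul_lt_mul_of_pos_right ?_ hw
    exact div_lt_div_of_pos_left (by positivity) (hD a ha) (by linarith)
  · rw [h1 0 le_rfl]
    simp
end
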